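/- Constant coefficients are best (corollary of the coefficient-shuffling theorem): Let (T, μ) be a probability space, let s > 0, let p ≥ 1 be a real number, and let k : T → ℝ be bounded and measurable. Let (σ_t)_{t ∈ [0,s]} be a family of measurable measure-preserving maps σ_t : T → T with σ₀ = id, such that for each τ ∈ T the map t ↦ k(σ_t(τ)) is continuous on [0,s]. Suppose j : T × [0,s] → ℝ is measurable, and for each τ ∈ T the function j(τ,·) is twice continuously differentiable with j(τ,0) = 0, ∂_t j(τ,0) = 1, ∂_t² j(τ,t) = k(σ_t(τ))·j(τ,t) for all t ∈ [0,s], and j(τ,t) > 0 for all t ∈ (0,s]. Then ∫_T j(τ,s)^p dμ(τ) ≤ ∫_T sn(−k(τ), s)^p dμ(τ). -/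

import Mathlib

open MeasureTheory

/-- The function `sn(k, t)`: the standard Jacobi solution of `j'' = -k·j`,
truncated at its first positive zero. -/
noncomputable def sn (k t : ℝ) : ℝ :=
  if 0 < k then
    if t ≤ Real.pi / Real.sqrt k then Real.sin (Real.sqrt k * t) / Real.sqrt k else 0
  else if k = 0 then t
  else Real.sinh (Real.sqrt (-k) * t) / Real.sqrt (-k)

open Set Filter Topology

/-!
Write `j'' = κ·j` for the equation along one orbit, read `j s` as `0` if `j` vanishes in `(0, s]`,
and let `y₀ = -(π/s)²` be the largest constant coefficient for which it does. For convex monotone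
`φ` there is a function `F` with

  `φ (j s) ≤ φ 0 + ∫ t in 0..s, F t (κ t)`, with equality if `κ` is constant.

The right-hand side is additive over time, so shuffling the coefficients by measure-preserving maps
does not change its integral over `T`, and the theorem follows.

To find `F`, replace `κ` by `min κ y` and raise `y` from `y₀`. By the Wronskian identity and Sturm
comparison, raising the coefficient at time `t` from level `y` increases `φ (j s)` at a rate of at
most its sensitivity at the constant coefficient `y`; `F t x` is the integral of this rate over `y`
from `y₀` to `x`. As `φ` is convex, the sensitivity is monotone in `y`, so over equal steps in `y`
the discretization errors telescope to a multiple of the step size.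
-/

section Calculus

variable {f g : ℝ → ℝ} {a b x y : ℝ} {S : Set ℝ}

theorem le_of_forall_sub_le_mul_sub (hab : a ≤ b)
    (h : ∀ y ∈ Icc a b, ∀ z ∈ Icc a b, y ≤ z → f z - f y ≤ (z - y) * (g z - g y)) :
    f b ≤ f a := by
  have hpartition (n : ℕ) : f b - f a ≤ (b - a) / ((n : ℝ) + 1) * (g b - g a) := by
    set δ := (b - a) / ((n : ℝ) + 1)
    have hδ : 0 ≤ δ := div_nonneg (sub_nonneg.2 hab) (by positivity)
    have hend : a + (n + 1 : ℕ) * δ = b := by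
      simp only [δ, Nat.cast_add, Nat.cast_one]
      field_simp
      ring
    have hmem (i : ℕ) (hi : i ≤ n + 1) : a + i * δ ∈ Icc a b := by
      refine ⟨le_add_of_nonneg_right (by positivity), hend ▸ ?_⟩
      gcongr
    have hsum (i : ℕ) (hi : i ≤ n + 1) :
        f (a + i * δ) - f a ≤ δ * (g (a + i * δ) - g a) := by
      induction i with
      | zero => simp
      | succ i ih =>
        have hgap : a + (i + 1 : ℕ) * δ - (a + i * δ) = δ := by push_cast; ring
        have hstep := h _ (hmem i (by lia)) _ (hmem (i + 1) hi) (by linarith)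
        rw [hgap] at hstep
        linarith [ih (by lia)]
    simpa only [hend] using hsum (n + 1) le_rfl
  have hlim : Tendsto (fun n : ℕ => (b - a) / ((n : ℝ) + 1) * (g b - g a)) atTop (𝓝 0) := by
    simpa [div_eq_mul_inv] using ((tendsto_one_div_add_atTop_nhds_zero_nat (𝕜 := ℝ)).const_mul
      (b - a)).mul_const (g b - g a)
  exact sub_nonpos.1 (ge_of_tendsto' hlim hpartition)

theorem sub_le_deriv_mul_sub_of_convexOn (hf : ConvexOn ℝ S f) (hx : x ∈ S) (hy : y ∈ S)
    (hd : DifferentiableAt ℝ f x) : f x - f y ≤ deriv f x * (x - y) := by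
  rcases lt_trichotomy x y with hxy | rfl | hxy
  · have h := hf.deriv_le_slope hx hy hxy hd
    rw [slope_def_field, le_div_iff₀ (sub_pos.2 hxy)] at h
    linarith
  · simp
  · have h := hf.slope_le_deriv hy hx hxy hd
    rwa [slope_def_field, div_le_iff₀ (sub_pos.2 hxy)] at h

theorem deriv_nonneg_of_monotoneOn (hf : MonotoneOn f S) (hS : UniqueDiffWithinAt ℝ S x)
    (hd : DifferentiableAt ℝ f x) : 0 ≤ deriv f x :=
  hd.derivWithin hS ▸ hf.derivWithin_nonneg

theorem exists_forall_hasDerivAt_of_lipschitzWith_of_bounded {E : Type*} [NormedAddCommGroup E]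
    [NormedSpace ℝ E] [CompleteSpace E] {F : ℝ → E → E} {K : NNReal} {M t₀ : ℝ}
    (hlip : ∀ t ∈ Icc a b, LipschitzWith K (F t)) (hcont : ∀ v, ContinuousOn (F · v) (Icc a b))
    (hM : ∀ t ∈ Icc a b, ∀ v, ‖F t v‖ ≤ M) (ht₀ : t₀ ∈ Icc a b) (v₀ : E) :
    ∃ α : ℝ → E, α t₀ = v₀ ∧ ∀ t ∈ Ioo a b, HasDerivAt α (F t (α t)) t := by
  have hpl : IsPicardLindelof F ⟨t₀, ht₀⟩ v₀ (M.toNNReal * (max (b - t₀) (t₀ - a)).toNNReal) 0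
      M.toNNReal K :=
    { lipschitzOnWith := fun t ht => (hlip t ht).lipschitzOnWith
      continuousOn := fun v _ => hcont v
      norm_le := fun t ht v _ => (hM t ht v).trans (Real.le_coe_toNNReal M)
      mul_max_le := by
        simp [Real.coe_toNNReal _ (le_max_of_le_left (sub_nonneg.2 ht₀.2))] }
  obtain ⟨α, hα₀, hα⟩ := hpl.exists_eq_forall_mem_Icc_hasDerivWithinAt₀
  exact ⟨α, hα₀, fun t ht =>
    (hα t (Ioo_subset_Icc_self ht)).hasDerivAt (Icc_mem_nhds ht.1 ht.2)⟩

theorem exists_first_zero_of_continuousOn (hf : ContinuousOn f (Icc a b))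
    (hpos : ∀ᶠ t in 𝓝[>] a, 0 < f t) (hx : x ∈ Ioc a b) (hfx : f x ≤ 0) :
    ∃ z ∈ Ioc a b, f z = 0 ∧ ∀ t ∈ Ioo a z, 0 < f t := by
  obtain ⟨e, he, hpose⟩ := mem_nhdsGT_iff_exists_Ioo_subset.1 hpos
  obtain ⟨c, hac, hce⟩ := exists_between (mem_Ioi.1 he)
  have hcx : c ≤ x := not_lt.1 fun hxc => (hpose ⟨hx.1, hxc.trans hce⟩).not_ge hfx
  have hsub : Icc c b ⊆ Icc a b := Icc_subset_Icc_left hac.le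
  have hcompact : IsCompact (Icc c b ∩ f ⁻¹' Iic 0) := isCompact_Icc.of_isClosed_subset
    ((hf.mono hsub).preimage_isClosed_of_isClosed isClosed_Icc isClosed_Iic) inter_subset_left
  obtain ⟨z, ⟨hzcb, hfz⟩, hzmin⟩ := hcompact.exists_isLeast ⟨x, ⟨hcx, hx.2⟩, hfx⟩
  have haz : a < z := hac.trans_le hzcb.1
  have hposz : ∀ t ∈ Ioo a z, 0 < f t := fun t ht => by
    rcases lt_or_ge t e with hte | het
    · exact hpose ⟨ht.1, hte⟩
    · by_contra! hft
      exact ht.2.not_ge (hzmin ⟨⟨hce.le.trans het, ht.2.le.trans hzcb.2⟩, hft⟩)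
  refine ⟨z, ⟨haz, hzcb.2⟩, le_antisymm hfz ?_, hposz⟩
  have hleft : Tendsto f (𝓝[Ioo a z] z) (𝓝 (f z)) :=
    (hf z (hsub hzcb)).mono (Ioo_subset_Icc_self.trans (Icc_subset_Icc_right hzcb.2))
  have : (𝓝[Ioo a z] z).NeBot := right_nhdsWithin_Ioo_neBot haz
  exact ge_of_tendsto hleft (eventually_mem_nhdsWithin.mono fun t ht => (hposz t ht).le)

theorem hasDerivAt_nonpos_of_forall_Ioo_nonneg {f' : ℝ} (hab : a < b) (hf : HasDerivAt f f' b)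
    (hfb : f b = 0) (hpos : ∀ t ∈ Ioo a b, 0 ≤ f t) : f' ≤ 0 := by
  refine le_of_tendsto (hf.tendsto_slope.mono_left
    (nhdsWithin_mono b (show Iio b ⊆ {b}ᶜ from fun t ht => (mem_Iio.1 ht).ne))) ?_
  filter_upwards [Ioo_mem_nhdsLT hab] with t ht
  rw [slope_def_field, hfb, sub_zero]
  exact div_nonpos_of_nonneg_of_nonpos (hpos t ht) (sub_nonpos.2 ht.2.le)

theorem mapsTo_const_sub_Icc_zero (s : ℝ) : MapsTo (fun t => s - t) (Icc 0 s) (Icc 0 s) :=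
  fun _ ht => ⟨sub_nonneg.2 ht.2, sub_le_self s ht.1⟩

theorem continuousOn_comp_const_sub {E : Type*} [TopologicalSpace E] {F : ℝ → E} {s : ℝ}
    (hF : ContinuousOn F (Icc 0 s)) : ContinuousOn (fun t => F (s - t)) (Icc 0 s) :=
  hF.comp (by fun_prop) (mapsTo_const_sub_Icc_zero s)

theorem integral_mul_mul_comp_const_sub_le {c f₁ g₁ : ℝ → ℝ} {s z : ℝ} (hz : z ∈ Icc 0 s)
    (hc : ContinuousOn c (Icc 0 s)) (hf : ContinuousOn f (Icc 0 s)) (hg : ContinuousOn g (Icc 0 z))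
    (hf₁ : ContinuousOn f₁ (Icc 0 s)) (hg₁ : ContinuousOn g₁ (Icc 0 s))
    (hc0 : ∀ t ∈ Icc 0 s, 0 ≤ c t) (hff₁ : ∀ t ∈ Icc 0 s, f t ≤ f₁ t)
    (hg0 : ∀ t ∈ Icc 0 z, 0 ≤ g t) (hgg₁ : ∀ t ∈ Icc 0 z, g t ≤ g₁ t)
    (hf₁0 : ∀ t ∈ Icc 0 s, 0 ≤ f₁ t) (hg₁0 : ∀ t ∈ Icc 0 s, 0 ≤ g₁ t) :
    ∫ t in (s - z)..s, c t * (f t * g (s - t)) ≤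
      ∫ t in (0 : ℝ)..s, c t * (f₁ t * g₁ (s - t)) := by
  have hrevz : MapsTo (fun t => s - t) (Icc (s - z) s) (Icc 0 z) := fun t ht =>
    ⟨sub_nonneg.2 ht.2, sub_le_comm.1 ht.1⟩
  have hrev := mapsTo_const_sub_Icc_zero s
  have hsub : Icc (s - z) s ⊆ Icc 0 s := Icc_subset_Icc_left (sub_nonneg.2 hz.2)
  have hzs : s - z ≤ s := sub_le_self s hz.1
  have hint : ContinuousOn (fun t => c t * (f₁ t * g₁ (s - t))) (Icc 0 s) :=
    hc.mul (hf₁.mul (continuousOn_comp_const_sub hg₁))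
  calc ∫ t in (s - z)..s, c t * (f t * g (s - t))
      ≤ ∫ t in (s - z)..s, c t * (f₁ t * g₁ (s - t)) := by
        refine intervalIntegral.integral_mono_on hzs
          (ContinuousOn.intervalIntegrable_of_Icc hzs ((hc.mono hsub).mul
            ((hf.mono hsub).mul (hg.comp (by fun_prop) hrevz))))
          ((hint.mono hsub).intervalIntegrable_of_Icc hzs) fun t ht => ?_
        exact mul_le_mul_of_nonneg_left (mul_le_mul (hff₁ t (hsub ht)) (hgg₁ _ (hrevz ht))
          (hg0 _ (hrevz ht)) (hf₁0 t (hsub ht))) (hc0 t (hsub ht))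
    _ ≤ ∫ t in (0 : ℝ)..s, c t * (f₁ t * g₁ (s - t)) := by
        refine intervalIntegral.integral_mono_interval (sub_nonneg.2 hz.2) hzs le_rfl ?_
          (hint.intervalIntegrable_of_Icc (hz.1.trans hz.2))
        filter_upwards [ae_restrict_mem measurableSet_Ioc] with t ht
        have ht' := Ioc_subset_Icc_self ht
        exact mul_nonneg (hc0 t ht') (mul_nonneg (hf₁0 t ht') (hg₁0 _ (hrev ht')))

end Calculus

/-- `u` solves the Jacobi equation `u'' = κ·u` on `[0, s]` with `u 0 = 0` and `u' 0 = 1`. The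
derivative is carried as the function `du`, and all derivatives are two-sided, also at `0` and
`s`. -/
structure IsJacobiSolution (κ : ℝ → ℝ) (s : ℝ) (u du : ℝ → ℝ) : Prop where
  zero : u 0 = 0
  deriv_zero : du 0 = 1
  hasDerivAt : ∀ t ∈ Icc 0 s, HasDerivAt u (du t) t
  hasDerivAt_deriv : ∀ t ∈ Icc 0 s, HasDerivAt du (κ t * u t) t

namespace IsJacobiSolution

variable {κ ν u du v dv : ℝ → ℝ} {r s y : ℝ}

theorem of_contDiff (hu : ContDiff ℝ 2 u) (h0 : u 0 = 0) (h0' : deriv u 0 = 1)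
    (heq : ∀ t ∈ Icc 0 s, deriv (deriv u) t = κ t * u t) : IsJacobiSolution κ s u (deriv u) := by
  have hdu : ContDiff ℝ 1 (deriv u) := hu.deriv'
  exact ⟨h0, h0', fun t _ => (hu.differentiable two_ne_zero t).hasDerivAt,
    fun t ht => heq t ht ▸ (hdu.differentiable one_ne_zero t).hasDerivAt⟩

theorem mono (h : IsJacobiSolution κ s u du) (hrs : r ≤ s) : IsJacobiSolution κ r u du :=
  ⟨h.zero, h.deriv_zero, fun t ht => h.hasDerivAt t ⟨ht.1, ht.2.trans hrs⟩,
    fun t ht => h.hasDerivAt_deriv t ⟨ht.1, ht.2.trans hrs⟩⟩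

theorem congr (h : IsJacobiSolution κ s u du) (hκν : EqOn κ ν (Icc 0 s)) :
    IsJacobiSolution ν s u du :=
  ⟨h.zero, h.deriv_zero, h.hasDerivAt, fun t ht => hκν ht ▸ h.hasDerivAt_deriv t ht⟩

theorem continuousOn (h : IsJacobiSolution κ s u du) : ContinuousOn u (Icc 0 s) :=
  HasDerivAt.continuousOn h.hasDerivAt

theorem nonneg_of_pos (hu : IsJacobiSolution κ s u du) (hpos : ∀ t ∈ Ioc 0 s, 0 < u t) :
    ∀ t ∈ Icc 0 s, 0 ≤ u t := fun t ht => by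
  rcases ht.1.eq_or_lt with rfl | ht0
  · exact hu.zero.ge
  · exact (hpos t ⟨ht0, ht.2⟩).le

/-- In polar coordinates `u = ρ sin θ`, `u' = ρ cos θ`, the equation `u'' = κ·u` becomes this
equation for the angle, together with `ρ' = (1 + κ) sin θ cos θ · ρ`. Unlike the original equation,
its right-hand side is bounded. -/
theorem exists_pruferAngle (hκ : Continuous κ) (hs : 0 ≤ s) :
    ∃ θ : ℝ → ℝ, θ 0 = 0 ∧ ∀ t ∈ Ioo (-1) (s + 1),
      HasDerivAt θ (Real.cos (θ t) ^ 2 - κ t * Real.sin (θ t) ^ 2) t := by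
  obtain ⟨M, hM⟩ := isCompact_Icc.exists_bound_of_continuousOn
    (hκ.continuousOn (s := Icc (-1) (s + 1)))
  have h0 : (0 : ℝ) ∈ Icc (-1) (s + 1) := ⟨by norm_num, by positivity⟩
  have hM0 : 0 ≤ M := (norm_nonneg _).trans (hM 0 h0)
  have hderiv (t θ : ℝ) : HasDerivAt (fun θ => Real.cos θ ^ 2 - κ t * Real.sin θ ^ 2)
      (-(1 + κ t) * Real.sin (2 * θ)) θ := by
    refine (((Real.hasDerivAt_cos θ).pow 2).sub
      (((Real.hasDerivAt_sin θ).pow 2).const_mul (κ t))).congr_deriv ?_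
    rw [Real.sin_two_mul]
    ring
  refine exists_forall_hasDerivAt_of_lipschitzWith_of_bounded
    (F := fun t θ => Real.cos θ ^ 2 - κ t * Real.sin θ ^ 2) (K := (1 + M).toNNReal) (M := 1 + M)
    (fun t ht => ?_) (fun θ => by fun_prop) (fun t ht θ => ?_) h0 0
  · refine lipschitzWith_of_nnnorm_deriv_le (fun θ => (hderiv t θ).differentiableAt) fun θ => ?_
    rw [(hderiv t θ).deriv, ← NNReal.coe_le_coe, coe_nnnorm, Real.coe_toNNReal _ (by positivity),
      norm_mul, norm_neg]
    calc ‖1 + κ t‖ * ‖Real.sin (2 * θ)‖ ≤ (1 + M) * 1 :=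
          mul_le_mul ((norm_add_le _ _).trans (by simpa using hM t ht)) (Real.abs_sin_le_one _)
            (norm_nonneg _) (by positivity)
      _ = 1 + M := mul_one _
  · calc ‖Real.cos θ ^ 2 - κ t * Real.sin θ ^ 2‖
        ≤ ‖Real.cos θ ^ 2‖ + ‖κ t‖ * ‖Real.sin θ ^ 2‖ :=
          (norm_sub_le _ _).trans_eq (by rw [norm_mul])
      _ ≤ 1 + M * 1 := by
          simp only [norm_pow, Real.norm_eq_abs, sq_abs]
          gcongr
          exacts [Real.cos_sq_le_one θ, hM t ht, Real.sin_sq_le_one θ]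
      _ = 1 + M := by rw [mul_one]

theorem exists_of_continuous (hκ : Continuous κ) (hs : 0 ≤ s) :
    ∃ u du, IsJacobiSolution κ s u du := by
  obtain ⟨θ, hθ0, hθ⟩ := exists_pruferAngle hκ hs
  let q : ℝ → ℝ := fun t => (1 + κ t) * (Real.sin (θ t) * Real.cos (θ t))
  have hθc : ContinuousOn θ (Ioo (-1) (s + 1)) := HasDerivAt.continuousOn hθ
  have hq : ContinuousOn q (Ioo (-1) (s + 1)) := by fun_prop
  have hsub : Icc 0 s ⊆ Ioo (-1) (s + 1) := Icc_subset_Ioo (by norm_num) (lt_add_one s)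
  let ρ : ℝ → ℝ := fun t => Real.exp (∫ x in (0 : ℝ)..t, q x)
  have hρ (t) (ht : t ∈ Icc 0 s) : HasDerivAt ρ (ρ t * q t) t := by
    have hqt : ContinuousOn q (uIcc 0 t) := hq.mono (uIcc_of_le ht.1 ▸
      (Icc_subset_Icc_right ht.2).trans hsub)
    exact (intervalIntegral.integral_hasDerivAt_right hqt.intervalIntegrable
      (hq.stronglyMeasurableAtFilter isOpen_Ioo _ (hsub ht))
      (hq.continuousAt (isOpen_Ioo.mem_nhds (hsub ht)))).exp
  refine ⟨fun t => ρ t * Real.sin (θ t), fun t => ρ t * Real.cos (θ t), by simp [hθ0],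
    by simp [hθ0, ρ], fun t ht => ?_, fun t ht => ?_⟩
  · refine ((hρ t ht).mul (hθ t (hsub ht)).sin).congr_deriv ?_
    simp only [q]
    linear_combination (ρ t * Real.cos (θ t)) * Real.sin_sq_add_cos_sq (θ t)
  · refine ((hρ t ht).mul (hθ t (hsub ht)).cos).congr_deriv ?_
    simp only [q]
    linear_combination (κ t * ρ t * Real.sin (θ t)) * Real.sin_sq_add_cos_sq (θ t)

theorem exists_of_continuousOn (hκ : ContinuousOn κ (Icc 0 s)) (hs : 0 ≤ s) :
    ∃ u du, IsJacobiSolution κ s u du := by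
  obtain ⟨u, du, hu⟩ := exists_of_continuous (κ := IccExtend hs ((Icc 0 s).domRestrict κ))
    hκ.domRestrict.Icc_extend' hs
  exact ⟨u, du, hu.congr fun t ht => IccExtend_of_mem hs _ ht⟩

/-- The quantity `t ↦ u' t * v (s - t) + u t * v' (s - t)` has derivative
`(κ t - ν (s - t)) * (u t * v (s - t))`. -/
theorem eq_add_integral (hu : IsJacobiSolution κ s u du) (hv : IsJacobiSolution ν s v dv)
    (hκ : ContinuousOn κ (Icc 0 s)) (hν : ContinuousOn ν (Icc 0 s)) (hr : r ∈ Icc 0 s) :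
    u s = du (s - r) * v r + u (s - r) * dv r +
      ∫ t in (s - r)..s, (κ t - ν (s - t)) * (u t * v (s - t)) := by
  have hsub : uIcc (s - r) s ⊆ Icc 0 s := by
    rw [uIcc_of_le (sub_le_self s hr.1)]
    exact Icc_subset_Icc_left (sub_nonneg.2 hr.2)
  have hmaps := mapsTo_const_sub_Icc_zero s
  have hwronskian (t) (ht : t ∈ uIcc (s - r) s) :
      HasDerivAt (fun t => du t * v (s - t) + u t * dv (s - t))
        ((κ t - ν (s - t)) * (u t * v (s - t))) t := by
    have hv₁ := HasDerivAt.comp_const_sub s t (hv.hasDerivAt _ (hmaps (hsub ht)))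
    have hv₂ := HasDerivAt.comp_const_sub s t (hv.hasDerivAt_deriv _ (hmaps (hsub ht)))
    refine (((hu.hasDerivAt_deriv t (hsub ht)).mul hv₁).add
      ((hu.hasDerivAt t (hsub ht)).mul hv₂)).congr_deriv ?_
    ring
  have hcont : ContinuousOn (fun t => (κ t - ν (s - t)) * (u t * v (s - t))) (Icc 0 s) :=
    (hκ.sub (continuousOn_comp_const_sub hν)).mul
      (hu.continuousOn.mul (continuousOn_comp_const_sub hv.continuousOn))
  have hint := intervalIntegral.integral_eq_sub_of_hasDerivAt hwronskian
    (hcont.mono hsub).intervalIntegrable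
  simp only [sub_self, sub_sub_cancel, hv.zero, hv.deriv_zero] at hint
  linarith

theorem eq_of_reverse (hu : IsJacobiSolution κ s u du)
    (hv : IsJacobiSolution (fun t => κ (s - t)) s v dv) (hκ : ContinuousOn κ (Icc 0 s))
    (hr : r ∈ Icc 0 s) : u s = du (s - r) * v r + u (s - r) * dv r := by
  simpa using hu.eq_add_integral hv hκ (continuousOn_comp_const_sub hκ) hr

theorem eq_of_reverse_right (hu : IsJacobiSolution κ s u du)
    (hv : IsJacobiSolution (fun t => κ (s - t)) s v dv) (hκ : ContinuousOn κ (Icc 0 s))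
    (hs : 0 ≤ s) : u s = v s := by
  simpa [hu.zero, hu.deriv_zero] using hu.eq_of_reverse hv hκ (right_mem_Icc.2 hs)

/-- Sturm comparison. A constant coefficient is invariant under time reversal, so the solution `v`
can itself be used in the Wronskian identity. -/
theorem le_of_le_const (hu : IsJacobiSolution κ s u du)
    (hv : IsJacobiSolution (fun _ => y) s v dv) (hκ : ContinuousOn κ (Icc 0 s))
    (hle : ∀ t ∈ Icc 0 s, κ t ≤ y) (hu0 : ∀ t ∈ Icc 0 s, 0 ≤ u t)
    (hv0 : ∀ t ∈ Icc 0 s, 0 ≤ v t) (hr : r ∈ Icc 0 s) : u r ≤ v r := by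
  have hsub : Icc 0 r ⊆ Icc 0 s := Icc_subset_Icc_right hr.2
  have hwronskian := (hu.mono hr.2).eq_add_integral (hv.mono hr.2) (hκ.mono hsub)
    continuousOn_const (right_mem_Icc.2 hr.1)
  simp only [sub_self, hu.zero, hu.deriv_zero, one_mul, zero_mul, add_zero] at hwronskian
  have hint : ∫ t in (0 : ℝ)..r, (κ t - y) * (u t * v (r - t)) ≤ 0 := by
    rw [← neg_nonneg, ← intervalIntegral.integral_neg]
    refine intervalIntegral.integral_nonneg hr.1 fun t ht => neg_nonneg.2 ?_
    exact mul_nonpos_of_nonpos_of_nonneg (sub_nonpos.2 (hle t (hsub ht))) (mul_nonneg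
      (hu0 t (hsub ht)) (hv0 _ (hsub (mapsTo_const_sub_Icc_zero r ht))))
  linarith

theorem pos_or_exists_first_zero (hu : IsJacobiSolution κ s u du) (hs : 0 < s) :
    (∀ t ∈ Ioc 0 s, 0 < u t) ∨
      ∃ z ∈ Ioc 0 s, u z = 0 ∧ du z ≤ 0 ∧ ∀ t ∈ Icc 0 z, 0 ≤ u t := by
  refine or_iff_not_imp_left.2 fun hnot => ?_
  push Not at hnot
  obtain ⟨x, hx, hux⟩ := hnot
  have hd0 := hu.hasDerivAt 0 (left_mem_Icc.2 hs.le)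
  have hsign : ∀ᶠ t in 𝓝[>] 0, 0 < u t := by
    have hd : 0 < deriv u 0 := by simp [hd0.deriv, hu.deriv_zero]
    filter_upwards [nhdsWithin_le_nhds (eventually_nhdsWithin_sign_eq_of_deriv_pos hd hu.zero),
      self_mem_nhdsWithin] with t hsign ht
    rwa [sub_zero, sign_pos (mem_Ioi.1 ht), sign_eq_one_iff] at hsign
  obtain ⟨z, hz, huz, hpos⟩ := exists_first_zero_of_continuousOn hu.continuousOn hsign hx hux
  refine ⟨z, hz, huz, hasDerivAt_nonpos_of_forall_Ioo_nonneg hz.1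
    (hu.hasDerivAt z (Ioc_subset_Icc_self hz)) huz fun t ht => (hpos t ht).le, ?_⟩
  intro t ht
  rcases ht.2.eq_or_lt with rfl | htz
  · exact huz.ge
  · rcases ht.1.eq_or_lt with rfl | ht0
    · exact hu.zero.ge
    · exact (hpos t ⟨ht0, htz⟩).le

theorem exists_reverse_pos (hu : IsJacobiSolution κ s u du) (hκ : ContinuousOn κ (Icc 0 s))
    (hs : 0 < s) (hpos : ∀ t ∈ Ioc 0 s, 0 < u t) :
    ∃ v dv, IsJacobiSolution (fun t => κ (s - t)) s v dv ∧ ∀ t ∈ Ioc 0 s, 0 < v t := by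
  obtain ⟨v, dv, hv⟩ := exists_of_continuousOn (continuousOn_comp_const_sub hκ) hs.le
  refine ⟨v, dv, hv, (hv.pos_or_exists_first_zero hs).resolve_right ?_⟩
  rintro ⟨z, hz, hvz, hdvz, -⟩
  have hus : u s = u (s - z) * dv z := by
    simpa [hvz] using hu.eq_of_reverse hv hκ (Ioc_subset_Icc_self hz)
  have huz : 0 ≤ u (s - z) :=
    hu.nonneg_of_pos hpos _ (mapsTo_const_sub_Icc_zero s (Ioc_subset_Icc_self hz))
  exact (hpos s ⟨hs, le_rfl⟩).not_ge (hus ▸ mul_nonpos_of_nonneg_of_nonpos huz hdvz)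

end IsJacobiSolution

/-- The largest constant `y` for which the solution of `j'' = y·j`, `j 0 = 0`, `j' 0 = 1` vanishes
at `s > 0`. -/
noncomputable def criticalCoeff (s : ℝ) : ℝ := -(Real.pi / s) ^ 2

/-- The derivative of `constSol y`. As `√` vanishes on the negative numbers, at least one of the two
factors is identically `1`. -/
noncomputable def constSolDeriv (y t : ℝ) : ℝ := Real.cos (√(-y) * t) * Real.cosh (√y * t)

/-- The solution of `j'' = y·j`, `j 0 = 0`, `j' 0 = 1` on the whole line, that is `sn (-y)` without
its truncation. Writing it as an integral makes it visibly continuous in `(y, t)`. -/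
noncomputable def constSol (y t : ℝ) : ℝ := ∫ x in (0 : ℝ)..t, constSolDeriv y x

namespace constSol

variable {s t y z : ℝ}

section Continuity

variable {X : Type*} [TopologicalSpace X] {f g : X → ℝ}

@[fun_prop]
theorem continuous_deriv (hf : Continuous f) (hg : Continuous g) :
    Continuous fun x => constSolDeriv (f x) (g x) := by
  unfold constSolDeriv
  fun_prop

@[fun_prop]
theorem continuous (hf : Continuous f) (hg : Continuous g) :
    Continuous fun x => constSol (f x) (g x) :=
  intervalIntegral.continuous_parametric_intervalIntegral_of_continuous
    (f := fun x => constSolDeriv (f x))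
    (continuous_deriv (hf.comp continuous_fst) continuous_snd) hg

end Continuity

theorem hasDerivAt (y t : ℝ) : HasDerivAt (constSol y) (constSolDeriv y t) t :=
  (Continuous.integral_hasStrictDerivAt (by fun_prop) 0 t).hasDerivAt

theorem eq_sin_of_neg (hy : y < 0) (t : ℝ) : constSol y t = Real.sin (√(-y) * t) / √(-y) := by
  have hq : √(-y) ≠ 0 := (Real.sqrt_pos.2 (neg_pos.2 hy)).ne'
  simp [constSol, constSolDeriv, Real.sqrt_eq_zero_of_nonpos hy.le, hq, inv_mul_eq_div]

theorem eq_id_of_zero (t : ℝ) : constSol 0 t = t := by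
  simp [constSol, constSolDeriv]

theorem eq_sinh_of_pos (hy : 0 < y) (t : ℝ) : constSol y t = Real.sinh (√y * t) / √y := by
  have hq : √y ≠ 0 := (Real.sqrt_pos.2 hy).ne'
  have hq' : √(-y) = 0 := Real.sqrt_eq_zero_of_nonpos (neg_nonpos.2 hy.le)
  have hcosh : ∫ x in (0 : ℝ)..√y * t, Real.cosh x = Real.sinh (√y * t) := by
    simpa using intervalIntegral.integral_eq_sub_of_hasDerivAt
      (fun x _ => Real.hasDerivAt_sinh x) (Real.continuous_cosh.intervalIntegrable 0 (√y * t))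
  simp [constSol, constSolDeriv, hq', hq, hcosh, inv_mul_eq_div]

theorem hasDerivAt_deriv (y t : ℝ) : HasDerivAt (constSolDeriv y) (y * constSol y t) t := by
  have hcos : HasDerivAt (fun t => Real.cos (√(-y) * t)) (-(√(-y) * Real.sin (√(-y) * t))) t :=
    ((hasDerivAt_id' t).const_mul √(-y)).cos.congr_deriv (by ring)
  have hcosh : HasDerivAt (fun t => Real.cosh (√y * t)) (√y * Real.sinh (√y * t)) t :=
    ((hasDerivAt_id' t).const_mul √y).cosh.congr_deriv (by ring)
  refine (hcos.mul hcosh).congr_deriv ?_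
  rcases lt_trichotomy y 0 with hy | rfl | hy
  · have hq : √(-y) ≠ 0 := (Real.sqrt_pos.2 (neg_pos.2 hy)).ne'
    rw [eq_sin_of_neg hy, Real.sqrt_eq_zero_of_nonpos hy.le]
    field_simp
    simp [← mul_assoc, Real.mul_self_sqrt (neg_pos.2 hy).le]
  · simp
  · have hq : √y ≠ 0 := (Real.sqrt_pos.2 hy).ne'
    rw [eq_sinh_of_pos hy, Real.sqrt_eq_zero_of_nonpos (neg_nonpos.2 hy.le)]
    field_simp
    simp [← mul_assoc, Real.mul_self_sqrt hy.le, mul_comm]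

theorem isJacobiSolution (y s : ℝ) :
    IsJacobiSolution (fun _ => y) s (constSol y) (constSolDeriv y) :=
  ⟨by simp [constSol], by simp [constSolDeriv], fun t _ => hasDerivAt y t,
    fun t _ => hasDerivAt_deriv y t⟩

theorem sqrt_neg_mul_le_pi_iff (hs : 0 < s) : √(-y) * s ≤ Real.pi ↔ criticalCoeff s ≤ y := by
  rw [← le_div_iff₀ hs, Real.sqrt_le_left (div_nonneg Real.pi_pos.le hs.le), neg_le, criticalCoeff]

theorem nonneg (hs : 0 < s) (hy : criticalCoeff s ≤ y) (ht : t ∈ Icc 0 s) :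
    0 ≤ constSol y t := by
  rcases lt_trichotomy y 0 with hy0 | rfl | hy0
  · rw [eq_sin_of_neg hy0]
    refine div_nonneg (Real.sin_nonneg_of_nonneg_of_le_pi
      (mul_nonneg (Real.sqrt_nonneg _) ht.1) ?_) (Real.sqrt_nonneg _)
    exact (mul_le_mul_of_nonneg_left ht.2 (Real.sqrt_nonneg _)).trans
      ((sqrt_neg_mul_le_pi_iff hs).2 hy)
  · exact (eq_id_of_zero t).symm ▸ ht.1
  · rw [eq_sinh_of_pos hy0]
    exact div_nonneg (Real.sinh_nonneg_iff.2 (mul_nonneg (Real.sqrt_nonneg _) ht.1))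
      (Real.sqrt_nonneg _)

theorem mul_const_sub_nonneg (hs : 0 < s) (hy : criticalCoeff s ≤ y) (ht : t ∈ Icc 0 s) :
    0 ≤ constSol y t * constSol y (s - t) :=
  mul_nonneg (nonneg hs hy ht) (nonneg hs hy (mapsTo_const_sub_Icc_zero s ht))

theorem eq_zero_of_criticalCoeff (hs : 0 < s) : constSol (criticalCoeff s) s = 0 := by
  have hpi : 0 < Real.pi / s := div_pos Real.pi_pos hs
  have hneg : criticalCoeff s < 0 := neg_neg_of_pos (by positivity)
  rw [eq_sin_of_neg hneg, criticalCoeff, neg_neg, Real.sqrt_sq hpi.le, div_mul_cancel₀ _ hs.ne',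
    Real.sin_pi, zero_div]

theorem sn_neg_eq (hs : 0 < s) (y : ℝ) : sn (-y) s = constSol (max (criticalCoeff s) y) s := by
  rcases lt_or_ge y 0 with hy | hy
  · have hy' : 0 < -y := neg_pos.2 hy
    rw [sn, if_pos hy']
    simp only [le_div_iff₀ (Real.sqrt_pos.2 hy'), mul_comm s, sqrt_neg_mul_le_pi_iff hs]
    split_ifs with h
    · rw [max_eq_right h, eq_sin_of_neg hy]
    · rw [max_eq_left (not_le.1 h).le, eq_zero_of_criticalCoeff hs]
  · have hc : criticalCoeff s ≤ 0 := neg_nonpos.2 (sq_nonneg _)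
    rw [max_eq_right (hc.trans hy), sn, if_neg (neg_nonpos.2 hy).not_gt]
    rcases hy.eq_or_lt with rfl | hy
    · simp [eq_id_of_zero]
    · simp [eq_sinh_of_pos hy, hy.ne']

theorem mono (hs : 0 < s) (hy : criticalCoeff s ≤ y) (hyz : y ≤ z) (ht : t ∈ Icc 0 s) :
    constSol y t ≤ constSol z t :=
  (isJacobiSolution y s).le_of_le_const (isJacobiSolution z s) continuousOn_const
    (fun _ _ => hyz) (fun _ => nonneg hs hy) (fun _ => nonneg hs (hy.trans hyz)) ht

theorem mul_const_sub_mono (hs : 0 < s) (hy : criticalCoeff s ≤ y) (hyz : y ≤ z)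
    (ht : t ∈ Icc 0 s) : constSol y t * constSol y (s - t) ≤ constSol z t * constSol z (s - t) :=
  have ht' := mapsTo_const_sub_Icc_zero s ht
  mul_le_mul (mono hs hy hyz ht) (mono hs hy hyz ht') (nonneg hs hy ht')
    (nonneg hs (hy.trans hyz) ht)

theorem sub_eq_integral (hs : 0 ≤ s) (y z : ℝ) : constSol z s - constSol y s =
    (z - y) * ∫ t in (0 : ℝ)..s, constSol z t * constSol y (s - t) := by
  have hy := isJacobiSolution y s
  have hz := isJacobiSolution z s
  have h := hz.eq_add_integral hy continuousOn_const continuousOn_const (right_mem_Icc.2 hs)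
  simp only [sub_self, hz.zero, hz.deriv_zero, one_mul, zero_mul, add_zero,
    intervalIntegral.integral_const_mul] at h
  linarith

theorem hasDerivAt_coeff (hs : 0 ≤ s) (y : ℝ) : HasDerivAt (fun x => constSol x s)
    (∫ t in (0 : ℝ)..s, constSol y t * constSol y (s - t)) y := by
  have hcont : Continuous fun z => ∫ t in (0 : ℝ)..s, constSol z t * constSol y (s - t) :=
    intervalIntegral.continuous_parametric_intervalIntegral_of_continuous' (by fun_prop) 0 s
  refine hasDerivAt_iff_tendsto_slope.2
    (((hcont.tendsto y).mono_left nhdsWithin_le_nhds).congr' ?_)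
  filter_upwards [self_mem_nhdsWithin] with z hz
  rw [slope_def_field, sub_eq_integral hs, mul_div_cancel_left₀ _ (sub_ne_zero.2 hz)]

end constSol

/-- The value at `s` of the solution of `u'' = κ·u`, `u 0 = 0`, `u' 0 = 1`, truncated after its
first positive zero: it is `u s` if `u` is positive on `(0, s]`, and `sSup ∅ = 0` otherwise. -/
noncomputable def truncatedValue (κ : ℝ → ℝ) (s : ℝ) : ℝ :=
  sSup {x | ∃ u du, IsJacobiSolution κ s u du ∧ (∀ t ∈ Ioc 0 s, 0 < u t) ∧ u s = x}

namespace IsJacobiSolution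

variable {κ κ₀ κ₁ u du v dv : ℝ → ℝ} {s y z : ℝ}

theorem truncatedValue_eq (hu : IsJacobiSolution κ s u du) (hκ : ContinuousOn κ (Icc 0 s))
    (hs : 0 ≤ s) (hpos : ∀ t ∈ Ioc 0 s, 0 < u t) : truncatedValue κ s = u s := by
  obtain ⟨w, dw, hw⟩ := exists_of_continuousOn (continuousOn_comp_const_sub hκ) hs
  rw [truncatedValue, ← csSup_singleton (u s)]
  congr 1
  ext x
  refine ⟨?_, fun hx => ⟨u, du, hu, hpos, hx.symm⟩⟩
  rintro ⟨v, dv, hv, -, rfl⟩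
  exact (hv.eq_of_reverse_right hw hκ hs).trans (hu.eq_of_reverse_right hw hκ hs).symm

theorem truncatedValue_eq_of_reverse (hv : IsJacobiSolution (fun t => κ (s - t)) s v dv)
    (hκ : ContinuousOn κ (Icc 0 s)) (hs : 0 < s) (hpos : ∀ t ∈ Ioc 0 s, 0 < v t) :
    truncatedValue κ s = v s := by
  obtain ⟨u, du, hu, hu0⟩ := hv.exists_reverse_pos (continuousOn_comp_const_sub hκ) hs hpos
  simp only [sub_sub_cancel] at hu
  rw [hu.truncatedValue_eq hκ hs.le hu0, hu.eq_of_reverse_right hv hκ hs.le]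

theorem le_add_integral_constSol (hs : 0 < s) (hy : criticalCoeff s ≤ y)
    (hκ₀ : ContinuousOn κ₀ (Icc 0 s)) (hκ₁ : ContinuousOn κ₁ (Icc 0 s))
    (hle : ∀ t ∈ Icc 0 s, κ₀ t ≤ κ₁ t) (hley : ∀ t ∈ Icc 0 s, κ₁ t ≤ y)
    (hu : IsJacobiSolution κ₁ s u du) (hu0 : ∀ t ∈ Icc 0 s, 0 ≤ u t)
    (hv : IsJacobiSolution (fun t => κ₀ (s - t)) s v dv) (hz : z ∈ Icc 0 s)
    (hv0 : ∀ t ∈ Icc 0 z, 0 ≤ v t) :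
    u s ≤ du (s - z) * v z + u (s - z) * dv z +
      ∫ t in (0 : ℝ)..s, (κ₁ t - κ₀ t) * (constSol y t * constSol y (s - t)) := by
  have hsubz : Icc 0 z ⊆ Icc 0 s := Icc_subset_Icc_right hz.2
  have hκ₀' := continuousOn_comp_const_sub hκ₀
  have hwc : ContinuousOn (constSol y) (Icc 0 s) := (constSol.isJacobiSolution y s).continuousOn
  have hw0 (t) (ht : t ∈ Icc 0 s) : 0 ≤ constSol y t := constSol.nonneg hs hy ht
  have hu_le (t) (ht : t ∈ Icc 0 s) : u t ≤ constSol y t :=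
    hu.le_of_le_const (constSol.isJacobiSolution y s) hκ₁ hley hu0 hw0 ht
  have hv_le (t) (ht : t ∈ Icc 0 z) : v t ≤ constSol y t := by
    refine (hv.mono hz.2).le_of_le_const (constSol.isJacobiSolution y z) (hκ₀'.mono hsubz)
      (fun r hr => ?_) hv0 (fun r hr => hw0 r (hsubz hr)) ht
    have hr' := mapsTo_const_sub_Icc_zero s (hsubz hr)
    exact (hle _ hr').trans (hley _ hr')
  rw [hu.eq_add_integral hv hκ₁ hκ₀' hz]
  simp only [sub_sub_cancel]
  gcongr
  exact integral_mul_mul_comp_const_sub_le hz (hκ₁.sub hκ₀) hu.continuousOn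
    (hv.mono hz.2).continuousOn hwc hwc (fun t ht => sub_nonneg.2 (hle t ht)) hu_le hv0 hv_le
    hw0 hw0

end IsJacobiSolution

namespace truncatedValue

variable {κ κ₀ κ₁ : ℝ → ℝ} {s y : ℝ}

theorem eq_zero_or_exists (hκ : ContinuousOn κ (Icc 0 s)) (hs : 0 ≤ s) :
    truncatedValue κ s = 0 ∨ ∃ u du, IsJacobiSolution κ s u du ∧ (∀ t ∈ Ioc 0 s, 0 < u t) ∧
      truncatedValue κ s = u s := by
  by_cases h : ∃ u du, IsJacobiSolution κ s u du ∧ ∀ t ∈ Ioc 0 s, 0 < u t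
  · obtain ⟨u, du, hu, hpos⟩ := h
    exact Or.inr ⟨u, du, hu, hpos, hu.truncatedValue_eq hκ hs hpos⟩
  · refine Or.inl ?_
    have hempty : {x | ∃ u du, IsJacobiSolution κ s u du ∧ (∀ t ∈ Ioc 0 s, 0 < u t) ∧
        u s = x} = ∅ :=
      eq_empty_of_forall_notMem fun x ⟨u, du, hu, hpos, _⟩ => h ⟨u, du, hu, hpos⟩
    rw [truncatedValue, hempty, Real.sSup_empty]

theorem nonneg (hs : 0 < s) : 0 ≤ truncatedValue κ s := by
  refine Real.sSup_nonneg ?_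
  rintro x ⟨u, du, -, hpos, rfl⟩
  exact (hpos s ⟨hs, le_rfl⟩).le

theorem le_constSol (hs : 0 < s) (hκ : ContinuousOn κ (Icc 0 s)) (hy : criticalCoeff s ≤ y)
    (hle : ∀ t ∈ Icc 0 s, κ t ≤ y) : truncatedValue κ s ≤ constSol y s := by
  have hs' : s ∈ Icc 0 s := right_mem_Icc.2 hs.le
  rcases eq_zero_or_exists hκ hs.le with h | ⟨u, du, hu, hpos, h⟩
  · exact h ▸ constSol.nonneg hs hy hs'
  · exact h ▸ hu.le_of_le_const (constSol.isJacobiSolution y s) hκ hle (hu.nonneg_of_pos hpos)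
      (fun _ => constSol.nonneg hs hy) hs'

theorem eq_zero_of_le_criticalCoeff (hs : 0 < s) (hκ : ContinuousOn κ (Icc 0 s))
    (hle : ∀ t ∈ Icc 0 s, κ t ≤ criticalCoeff s) : truncatedValue κ s = 0 :=
  le_antisymm ((le_constSol hs hκ le_rfl hle).trans_eq (constSol.eq_zero_of_criticalCoeff hs))
    (nonneg hs)

theorem le_add_integral (hs : 0 < s) (hy : criticalCoeff s ≤ y)
    (hκ₀ : ContinuousOn κ₀ (Icc 0 s)) (hκ₁ : ContinuousOn κ₁ (Icc 0 s))
    (hle : ∀ t ∈ Icc 0 s, κ₀ t ≤ κ₁ t) (hley : ∀ t ∈ Icc 0 s, κ₁ t ≤ y) :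
    truncatedValue κ₁ s ≤ truncatedValue κ₀ s +
      ∫ t in (0 : ℝ)..s, (κ₁ t - κ₀ t) * (constSol y t * constSol y (s - t)) := by
  rcases eq_zero_or_exists hκ₁ hs.le with h | ⟨u, du, hu, hupos, h⟩
  · exact h ▸ add_nonneg (nonneg hs) (intervalIntegral.integral_nonneg hs.le fun t ht =>
      mul_nonneg (sub_nonneg.2 (hle t ht)) (constSol.mul_const_sub_nonneg hs hy ht))
  obtain ⟨v, dv, hv⟩ :=
    IsJacobiSolution.exists_of_continuousOn (continuousOn_comp_const_sub hκ₀) hs.le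
  have hu0 := hu.nonneg_of_pos hupos
  rw [h]
  rcases hv.pos_or_exists_first_zero hs with hvpos | ⟨z, hz, hvz, hdvz, hv0⟩
  · have hbound := hu.le_add_integral_constSol hs hy hκ₀ hκ₁ hle hley hu0 hv
      (right_mem_Icc.2 hs.le) (hv.nonneg_of_pos hvpos)
    simpa [hu.zero, hu.deriv_zero, hv.truncatedValue_eq_of_reverse hκ₀ hs hvpos] using hbound
  · have hbound := hu.le_add_integral_constSol hs hy hκ₀ hκ₁ hle hley hu0 hv
      (Ioc_subset_Icc_self hz) hv0
    have huz := hu0 (s - z) (mapsTo_const_sub_Icc_zero s (Ioc_subset_Icc_self hz))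
    have hboundary : du (s - z) * v z + u (s - z) * dv z ≤ truncatedValue κ₀ s := by
      rw [hvz, mul_zero, zero_add]
      exact (mul_nonpos_of_nonneg_of_nonpos huz hdvz).trans (nonneg hs)
    linarith

end truncatedValue

/-- The derivative of `φ (constSol y s)` with respect to the value at time `t` of the coefficient,
where `y` is the constant coefficient. -/
noncomputable def sensitivity (φ : ℝ → ℝ) (s y t : ℝ) : ℝ :=
  deriv φ (constSol y s) * (constSol y t * constSol y (s - t))

/-- The total gain in `φ (constSol · s)` that is attributed to time `t` while the coefficient is
raised from `criticalCoeff s`, below which it has no effect, to `x`. -/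
noncomputable def cumulativeSensitivity (φ : ℝ → ℝ) (s t x : ℝ) : ℝ :=
  ∫ y in criticalCoeff s..max (criticalCoeff s) x, sensitivity φ s y t

section Sensitivity

variable {φ κ κ₀ κ₁ : ℝ → ℝ} {s t x y z : ℝ}

theorem continuous_sensitivity {X : Type*} [TopologicalSpace X] {f g : X → ℝ}
    (hφ : ContDiff ℝ 1 φ) (hf : Continuous f) (hg : Continuous g) :
    Continuous fun q => sensitivity φ s (f q) (g q) := by
  have : Continuous (deriv φ) := hφ.continuous_deriv le_rfl
  unfold sensitivity
  fun_prop

theorem sensitivity_nonneg (hφ : Differentiable ℝ φ) (hmono : MonotoneOn φ (Ici 0)) (hs : 0 < s)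
    (hy : criticalCoeff s ≤ y) (ht : t ∈ Icc 0 s) : 0 ≤ sensitivity φ s y t :=
  mul_nonneg (deriv_nonneg_of_monotoneOn hmono
    (uniqueDiffOn_Ici 0 _ (constSol.nonneg hs hy (right_mem_Icc.2 hs.le))) (hφ _))
    (constSol.mul_const_sub_nonneg hs hy ht)

theorem sensitivity_mono (hφ : Differentiable ℝ φ) (hconv : ConvexOn ℝ (Ici 0) φ)
    (hmono : MonotoneOn φ (Ici 0)) (hs : 0 < s) (hy : criticalCoeff s ≤ y) (hyz : y ≤ z)
    (ht : t ∈ Icc 0 s) : sensitivity φ s y t ≤ sensitivity φ s z t := by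
  have hs' : s ∈ Icc 0 s := right_mem_Icc.2 hs.le
  have hy0 := constSol.nonneg hs hy hs'
  have hz0 := constSol.nonneg hs (hy.trans hyz) hs'
  exact mul_le_mul
    (hconv.monotoneOn_deriv (fun x _ => hφ x) hy0 hz0 (constSol.mono hs hy hyz hs'))
    (constSol.mul_const_sub_mono hs hy hyz ht) (constSol.mul_const_sub_nonneg hs hy ht)
    (deriv_nonneg_of_monotoneOn hmono (uniqueDiffOn_Ici 0 _ hz0) (hφ _))

theorem integral_sensitivity_coeff (hφ : ContDiff ℝ 1 φ) (hs : 0 < s) (x y : ℝ) :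
    ∫ z in x..y, ∫ t in (0 : ℝ)..s, sensitivity φ s z t =
      φ (constSol y s) - φ (constSol x s) := by
  refine intervalIntegral.integral_eq_sub_of_hasDerivAt (f := fun z => φ (constSol z s))
    (fun z _ => ?_) (Continuous.intervalIntegrable ?_ _ _)
  · simp only [sensitivity, intervalIntegral.integral_const_mul]
    exact (hφ.differentiable one_ne_zero _).hasDerivAt.comp z (constSol.hasDerivAt_coeff hs.le z)
  · exact intervalIntegral.continuous_parametric_intervalIntegral_of_continuous'
      (continuous_sensitivity hφ continuous_fst continuous_snd) 0 s

theorem map_truncatedValue_sub_le (hφ : Differentiable ℝ φ) (hconv : ConvexOn ℝ (Ici 0) φ)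
    (hmono : MonotoneOn φ (Ici 0)) (hs : 0 < s) (hy : criticalCoeff s ≤ y)
    (hκ₀ : ContinuousOn κ₀ (Icc 0 s)) (hκ₁ : ContinuousOn κ₁ (Icc 0 s))
    (hle : ∀ t ∈ Icc 0 s, κ₀ t ≤ κ₁ t) (hley : ∀ t ∈ Icc 0 s, κ₁ t ≤ y) :
    φ (truncatedValue κ₁ s) - φ (truncatedValue κ₀ s) ≤
      ∫ t in (0 : ℝ)..s, (κ₁ t - κ₀ t) * sensitivity φ s y t := by
  have hs' : s ∈ Icc 0 s := right_mem_Icc.2 hs.le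
  have hv₁ : truncatedValue κ₁ s ∈ Ici 0 := truncatedValue.nonneg hs
  have hgain := truncatedValue.le_add_integral hs hy hκ₀ hκ₁ hle hley
  set I := ∫ t in (0 : ℝ)..s, (κ₁ t - κ₀ t) * (constSol y t * constSol y (s - t))
  have hI : 0 ≤ I := intervalIntegral.integral_nonneg hs.le fun t ht =>
    mul_nonneg (sub_nonneg.2 (hle t ht)) (constSol.mul_const_sub_nonneg hs hy ht)
  calc φ (truncatedValue κ₁ s) - φ (truncatedValue κ₀ s)
      ≤ deriv φ (truncatedValue κ₁ s) * (truncatedValue κ₁ s - truncatedValue κ₀ s) :=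
        sub_le_deriv_mul_sub_of_convexOn hconv hv₁ (truncatedValue.nonneg hs) (hφ _)
    _ ≤ deriv φ (truncatedValue κ₁ s) * I :=
        mul_le_mul_of_nonneg_left (sub_le_iff_le_add'.2 hgain)
          (deriv_nonneg_of_monotoneOn hmono (uniqueDiffOn_Ici 0 _ hv₁) (hφ _))
    _ ≤ deriv φ (constSol y s) * I :=
        mul_le_mul_of_nonneg_right (hconv.monotoneOn_deriv (fun x _ => hφ x) hv₁
          (constSol.nonneg hs hy hs') (truncatedValue.le_constSol hs hκ₁ hy hley)) hI
    _ = ∫ t in (0 : ℝ)..s, (κ₁ t - κ₀ t) * sensitivity φ s y t := by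
        rw [← intervalIntegral.integral_const_mul]
        exact intervalIntegral.integral_congr fun t _ => by simp only [sensitivity]; ring

theorem continuous_cumulativeSensitivity {X : Type*} [TopologicalSpace X] {f g : X → ℝ}
    (hφ : ContDiff ℝ 1 φ) (hf : Continuous f) (hg : Continuous g) :
    Continuous fun q => cumulativeSensitivity φ s (f q) (g q) :=
  intervalIntegral.continuous_parametric_intervalIntegral_of_continuous
    (f := fun q y => sensitivity φ s y (f q))
    (continuous_sensitivity hφ continuous_snd (hf.comp continuous_fst))
    (continuous_const.max hg)

theorem cumulativeSensitivity_eq_zero (hx : x ≤ criticalCoeff s) :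
    cumulativeSensitivity φ s t x = 0 := by
  rw [cumulativeSensitivity, max_eq_left hx, intervalIntegral.integral_same]

theorem integral_cumulativeSensitivity (hφ : ContDiff ℝ 1 φ) (hs : 0 < s) (x : ℝ) :
    ∫ t in (0 : ℝ)..s, cumulativeSensitivity φ s t x = φ (sn (-x) s) - φ 0 := by
  have hint : IntegrableOn (Function.uncurry fun t y => sensitivity φ s y t)
      (uIoc 0 s ×ˢ uIoc (criticalCoeff s) (max (criticalCoeff s) x)) :=
    ((continuous_sensitivity hφ continuous_snd continuous_fst).continuousOn.integrableOn_compact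
      (isCompact_uIcc.prod isCompact_uIcc)).mono_set (prod_mono uIoc_subset_uIcc uIoc_subset_uIcc)
  simp only [cumulativeSensitivity]
  rw [intervalIntegral_intervalIntegral_swap hint, integral_sensitivity_coeff hφ hs,
    constSol.sn_neg_eq hs, constSol.eq_zero_of_criticalCoeff hs]

theorem cumulativeSensitivity_sub (hφ : ContDiff ℝ 1 φ) (x y : ℝ) :
    cumulativeSensitivity φ s t y - cumulativeSensitivity φ s t x =
      ∫ z in max (criticalCoeff s) x..max (criticalCoeff s) y, sensitivity φ s z t := by
  have hcont : Continuous fun z => sensitivity φ s z t :=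
    continuous_sensitivity hφ continuous_id continuous_const
  exact intervalIntegral.integral_interval_sub_left (hcont.intervalIntegrable _ _)
    (hcont.intervalIntegrable _ _)

theorem cumulativeSensitivity_mono (hφ : ContDiff ℝ 1 φ) (hmono : MonotoneOn φ (Ici 0))
    (hs : 0 < s) (ht : t ∈ Icc 0 s) : Monotone (cumulativeSensitivity φ s t) := fun x y hxy => by
  rw [← sub_nonneg, cumulativeSensitivity_sub hφ]
  exact intervalIntegral.integral_nonneg (max_le_max_left _ hxy) fun z hz =>
    sensitivity_nonneg (hφ.differentiable one_ne_zero) hmono hs ((le_max_left _ _).trans hz.1) ht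

theorem cumulativeSensitivity_nonneg (hφ : ContDiff ℝ 1 φ) (hmono : MonotoneOn φ (Ici 0))
    (hs : 0 < s) (ht : t ∈ Icc 0 s) : 0 ≤ cumulativeSensitivity φ s t x :=
  (cumulativeSensitivity_eq_zero (min_le_right x _)).symm.le.trans
    (cumulativeSensitivity_mono hφ hmono hs ht (min_le_left _ _))

theorem sub_mul_sensitivity_le (hφ : ContDiff ℝ 1 φ) (hconv : ConvexOn ℝ (Ici 0) φ)
    (hmono : MonotoneOn φ (Ici 0)) (hs : 0 < s) (hy : criticalCoeff s ≤ y) (hyz : y ≤ z)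
    (ht : t ∈ Icc 0 s) : (z - y) * sensitivity φ s y t ≤
      cumulativeSensitivity φ s t z - cumulativeSensitivity φ s t y := by
  have hcont : Continuous fun x => sensitivity φ s x t :=
    continuous_sensitivity hφ continuous_id continuous_const
  rw [cumulativeSensitivity_sub hφ, max_eq_right hy, max_eq_right (hy.trans hyz)]
  calc (z - y) * sensitivity φ s y t = ∫ _ in y..z, sensitivity φ s y t := by simp
    _ ≤ ∫ x in y..z, sensitivity φ s x t :=
        intervalIntegral.integral_mono_on hyz intervalIntegrable_const
          (hcont.intervalIntegrable _ _) fun x hx =>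
            sensitivity_mono (hφ.differentiable one_ne_zero) hconv hmono hs hy hx.1 ht

theorem min_sub_min_mul_sensitivity_sub_le (hφ : ContDiff ℝ 1 φ) (hconv : ConvexOn ℝ (Ici 0) φ)
    (hmono : MonotoneOn φ (Ici 0)) (hs : 0 < s) (hy : criticalCoeff s ≤ y) (hyz : y ≤ z)
    (ht : t ∈ Icc 0 s) : (min x z - min x y) * sensitivity φ s z t -
      (cumulativeSensitivity φ s t (min x z) - cumulativeSensitivity φ s t (min x y)) ≤
        (z - y) * (sensitivity φ s z t - sensitivity φ s y t) := by
  have hS := sensitivity_mono (hφ.differentiable one_ne_zero) hconv hmono hs hy hyz ht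
  rcases le_total x y with hxy | hyx
  · rw [min_eq_left hxy, min_eq_left (hxy.trans hyz)]
    simpa using mul_nonneg (sub_nonneg.2 hyz) (sub_nonneg.2 hS)
  · rw [min_eq_right hyx]
    have hF := sub_mul_sensitivity_le hφ hconv hmono hs hy (le_min hyx hyz) ht
    have hgap : (min x z - y) * (sensitivity φ s z t - sensitivity φ s y t) ≤
        (z - y) * (sensitivity φ s z t - sensitivity φ s y t) :=
      mul_le_mul_of_nonneg_right (sub_le_sub_right (min_le_right x z) y) (sub_nonneg.2 hS)
    linarith

theorem map_truncatedValue_min_sub_le (hφ : ContDiff ℝ 1 φ) (hconv : ConvexOn ℝ (Ici 0) φ)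
    (hmono : MonotoneOn φ (Ici 0)) (hs : 0 < s) (hκ : ContinuousOn κ (Icc 0 s))
    (hy : criticalCoeff s ≤ y) (hyz : y ≤ z) :
    (φ (truncatedValue (fun t => min (κ t) z) s) -
        ∫ t in (0 : ℝ)..s, cumulativeSensitivity φ s t (min (κ t) z)) -
      (φ (truncatedValue (fun t => min (κ t) y) s) -
        ∫ t in (0 : ℝ)..s, cumulativeSensitivity φ s t (min (κ t) y)) ≤
      (z - y) * ((∫ t in (0 : ℝ)..s, sensitivity φ s z t) -
        ∫ t in (0 : ℝ)..s, sensitivity φ s y t) := by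
  have hmin (x : ℝ) : ContinuousOn (fun t => min (κ t) x) (Icc 0 s) :=
    hκ.inf continuousOn_const
  have hF (x : ℝ) : IntervalIntegrable (fun t => cumulativeSensitivity φ s t (min (κ t) x))
      volume 0 s := ContinuousOn.intervalIntegrable_of_Icc hs.le <|
    (continuous_cumulativeSensitivity hφ continuous_fst continuous_snd).comp_continuousOn
      (continuousOn_id.prodMk (hmin x))
  have hS (x : ℝ) : Continuous (sensitivity φ s x) :=
    continuous_sensitivity hφ continuous_const continuous_id
  have hSi (x : ℝ) : IntervalIntegrable (fun t => sensitivity φ s x t) volume 0 s :=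
    (hS x).intervalIntegrable 0 s
  have hgain : IntervalIntegrable (fun t => (min (κ t) z - min (κ t) y) * sensitivity φ s z t)
      volume 0 s := ContinuousOn.intervalIntegrable_of_Icc hs.le <|
    ((hmin z).sub (hmin y)).mul (hS z).continuousOn
  have hstep := map_truncatedValue_sub_le (hφ.differentiable one_ne_zero) hconv hmono hs
    (hy.trans hyz) (hmin y) (hmin z) (fun t _ => min_le_min_left (κ t) hyz)
    fun t _ => min_le_right (κ t) z
  have hpointwise := intervalIntegral.integral_mono_on hs.le (hgain.sub ((hF z).sub (hF y)))
    ((((hSi z).sub (hSi y)).const_mul (z - y))) fun t ht =>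
      min_sub_min_mul_sensitivity_sub_le (x := κ t) hφ hconv hmono hs hy hyz ht
  rw [intervalIntegral.integral_sub hgain ((hF z).sub (hF y)),
    intervalIntegral.integral_sub (hF z) (hF y), intervalIntegral.integral_const_mul,
    intervalIntegral.integral_sub (hSi z) (hSi y)] at hpointwise
  linarith

theorem IsJacobiSolution.map_le_add_integral_cumulativeSensitivity {u du : ℝ → ℝ}
    (hφ : ContDiff ℝ 1 φ) (hconv : ConvexOn ℝ (Ici 0) φ) (hmono : MonotoneOn φ (Ici 0))
    (hs : 0 < s) (hκ : ContinuousOn κ (Icc 0 s)) (hu : IsJacobiSolution κ s u du)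
    (hpos : ∀ t ∈ Ioc 0 s, 0 < u t) :
    φ (u s) ≤ φ 0 + ∫ t in (0 : ℝ)..s, cumulativeSensitivity φ s t (κ t) := by
  obtain ⟨M, hM⟩ := isCompact_Icc.bddAbove_image hκ
  have hκM (t) (ht : t ∈ Icc 0 s) : min (κ t) (max (criticalCoeff s) M) = κ t :=
    min_eq_left ((hM (mem_image_of_mem κ ht)).trans (le_max_right _ _))
  have hlow : truncatedValue (fun t => min (κ t) (criticalCoeff s)) s = 0 :=
    truncatedValue.eq_zero_of_le_criticalCoeff hs (hκ.inf continuousOn_const)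
      fun t _ => min_le_right _ _
  have hhigh : truncatedValue (fun t => min (κ t) (max (criticalCoeff s) M)) s = u s :=
    (hu.congr fun t ht => (hκM t ht).symm).truncatedValue_eq (hκ.inf continuousOn_const) hs.le hpos
  have hcumulative : ∫ t in (0 : ℝ)..s, cumulativeSensitivity φ s t
      (min (κ t) (max (criticalCoeff s) M)) =
        ∫ t in (0 : ℝ)..s, cumulativeSensitivity φ s t (κ t) :=
    intervalIntegral.integral_congr fun t ht => by
      simp only [hκM t (uIcc_of_le hs.le ▸ ht)]
  have h := le_of_forall_sub_le_mul_sub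
    (f := fun y => φ (truncatedValue (fun t => min (κ t) y) s) -
      ∫ t in (0 : ℝ)..s, cumulativeSensitivity φ s t (min (κ t) y))
    (g := fun y => ∫ t in (0 : ℝ)..s, sensitivity φ s y t) (le_max_left (criticalCoeff s) M)
    fun y hy z _ hyz => map_truncatedValue_min_sub_le hφ hconv hmono hs hκ hy.1 hyz
  simp only [hlow, hhigh, hcumulative, cumulativeSensitivity_eq_zero (min_le_right _ _),
    intervalIntegral.integral_zero, sub_zero] at h
  linarith

end Sensitivity

section Shuffling

variable {T X E : Type*} [MeasurableSpace T] {μ : Measure T} [IsFiniteMeasure μ]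
  [TopologicalSpace X] [TopologicalSpace.PseudoMetrizableSpace X] [MeasurableSpace X]
  [BorelSpace X] [NormedAddCommGroup E] {a b : ℝ} {σ : ℝ → T → T} {k : T → X}
  {F : ℝ → X → E} {g : ℝ → ℝ}

theorem integrable_prod_comp_measurePreserving (hab : a ≤ b) (hk : Measurable k)
    (hσ : ∀ t ∈ Icc a b, MeasurePreserving (σ t) μ μ)
    (hkσ : ∀ τ, ContinuousOn (fun t => k (σ t τ)) (Icc a b))
    (hF : StronglyMeasurable (Function.uncurry F)) (hg : IntegrableOn g (Ioc a b))
    (hFg : ∀ t ∈ Ioc a b, ∀ τ, ‖F t (k τ)‖ ≤ g t) :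
    Integrable (fun q : ℝ × T => F q.1 (k (σ q.1 q.2))) ((volume.restrict (Ioc a b)).prod μ) := by
  have hmem : ∀ᵐ q ∂(volume.restrict (Ioc a b)).prod μ, q.1 ∈ Ioc a b :=
    Measure.quasiMeasurePreserving_fst.ae (ae_restrict_mem measurableSet_Ioc)
  have hmeas : Measurable (Function.uncurry fun t τ => k (σ (projIcc a b hab t) τ)) :=
    measurable_uncurry_of_continuous_of_measurable
      (fun τ => (hkσ τ).domRestrict.Icc_extend')
      fun t => hk.comp (hσ _ (projIcc a b hab t).2).measurable
  refine (hg.comp_fst μ).mono' ?_ (hmem.mono fun q hq => hFg q.1 hq _)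
  refine (hF.comp_measurable (measurable_fst.prodMk hmeas)).aestronglyMeasurable.congr ?_
  filter_upwards [hmem] with q hq
  simp [Function.uncurry, projIcc_of_mem hab (Ioc_subset_Icc_self hq)]

variable [NormedSpace ℝ E]

theorem integrable_intervalIntegral_comp_measurePreserving (hab : a ≤ b) (hk : Measurable k)
    (hσ : ∀ t ∈ Icc a b, MeasurePreserving (σ t) μ μ)
    (hkσ : ∀ τ, ContinuousOn (fun t => k (σ t τ)) (Icc a b))
    (hF : StronglyMeasurable (Function.uncurry F)) (hg : IntegrableOn g (Ioc a b))
    (hFg : ∀ t ∈ Ioc a b, ∀ τ, ‖F t (k τ)‖ ≤ g t) :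
    Integrable (fun τ => ∫ t in a..b, F t (k (σ t τ))) μ := by
  simpa only [intervalIntegral.integral_of_le hab] using
    (integrable_prod_comp_measurePreserving hab hk hσ hkσ hF hg hFg).integral_prod_right

theorem integral_intervalIntegral_comp_measurePreserving (hab : a ≤ b) (hk : Measurable k)
    (hσ : ∀ t ∈ Icc a b, MeasurePreserving (σ t) μ μ)
    (hkσ : ∀ τ, ContinuousOn (fun t => k (σ t τ)) (Icc a b))
    (hF : StronglyMeasurable (Function.uncurry F)) (hg : IntegrableOn g (Ioc a b))
    (hFg : ∀ t ∈ Ioc a b, ∀ τ, ‖F t (k τ)‖ ≤ g t) :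
    ∫ τ, (∫ t in a..b, F t (k (σ t τ))) ∂μ = ∫ τ, (∫ t in a..b, F t (k τ)) ∂μ := by
  have hshuffled := integrable_prod_comp_measurePreserving hab hk hσ hkσ hF hg hFg
  have hunshuffled := integrable_prod_comp_measurePreserving (σ := fun _ => id) hab hk
    (fun _ _ => .id μ) (fun _ => continuousOn_const) hF hg hFg
  simp only [← uIoc_of_le hab] at hshuffled hunshuffled
  rw [← intervalIntegral_integral_swap hshuffled, ← intervalIntegral_integral_swap hunshuffled]
  refine intervalIntegral.integral_congr fun t ht => ?_
  have hmp := hσ t (uIcc_of_le hab ▸ ht)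
  have hmeas : AEStronglyMeasurable (fun τ => F t (k τ)) (μ.map (σ t)) :=
    (hF.comp_measurable (measurable_const.prodMk hk)).aestronglyMeasurable
  exact (integral_map hmp.aemeasurable hmeas).symm.trans (by rw [hmp.map_eq])

end Shuffling

theorem constant_coefficients_are_best_general {T : Type*} [MeasurableSpace T] {μ : Measure T}
    [IsFiniteMeasure μ] {s C : ℝ} (hs : 0 < s) {φ : ℝ → ℝ} (hφ : ContDiff ℝ 1 φ)
    (hconv : ConvexOn ℝ (Ici 0) φ) (hmono : MonotoneOn φ (Ici 0)) {k : T → ℝ} (hk : Measurable k)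
    (hkC : ∀ τ, k τ ≤ C) {σ : ℝ → T → T} (hσ : ∀ t ∈ Icc 0 s, MeasurePreserving (σ t) μ μ)
    (hkσ : ∀ τ, ContinuousOn (fun t => k (σ t τ)) (Icc 0 s)) {j dj : T → ℝ → ℝ}
    (hj : ∀ τ, IsJacobiSolution (fun t => k (σ t τ)) s (j τ) (dj τ))
    (hjpos : ∀ τ, ∀ t ∈ Ioc 0 s, 0 < j τ t) (hjmeas : AEStronglyMeasurable (fun τ => j τ s) μ) :
    ∫ τ, φ (j τ s) ∂μ ≤ ∫ τ, φ (sn (-(k τ)) s) ∂μ := by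
  let F : ℝ → ℝ → ℝ := cumulativeSensitivity φ s
  have hF : Continuous (Function.uncurry F) :=
    continuous_cumulativeSensitivity hφ continuous_fst continuous_snd
  have hFC : IntegrableOn (F · C) (Ioc 0 s) :=
    (continuous_cumulativeSensitivity hφ continuous_id continuous_const).integrableOn_Ioc
  have hFkC (t) (ht : t ∈ Ioc 0 s) (τ : T) : ‖F t (k τ)‖ ≤ F t C := by
    have ht' : t ∈ Icc 0 s := Ioc_subset_Icc_self ht
    rw [Real.norm_of_nonneg (cumulativeSensitivity_nonneg hφ hmono hs ht')]
    exact cumulativeSensitivity_mono hφ hmono hs ht' (hkC τ)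
  have hint := integrable_intervalIntegral_comp_measurePreserving hs.le hk hσ hkσ
    hF.stronglyMeasurable hFC hFkC
  have hpointwise (τ : T) : φ (j τ s) ≤ φ 0 + ∫ t in (0 : ℝ)..s, F t (k (σ t τ)) :=
    (hj τ).map_le_add_integral_cumulativeSensitivity hφ hconv hmono hs (hkσ τ) (hjpos τ)
  have hφj : Integrable (fun τ => φ (j τ s)) μ :=
    integrable_of_le_of_le (hφ.continuous.comp_aestronglyMeasurable hjmeas)
      (.of_forall fun τ => hmono self_mem_Ici (hjpos τ s ⟨hs, le_rfl⟩).le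
        (hjpos τ s ⟨hs, le_rfl⟩).le)
      (.of_forall hpointwise) (integrable_const (φ 0)) ((integrable_const _).add hint)
  have hunshuffled : Integrable (fun τ => ∫ t in (0 : ℝ)..s, F t (k τ)) μ :=
    integrable_intervalIntegral_comp_measurePreserving (σ := fun _ => id) hs.le hk
      (fun _ _ => .id μ) (fun _ => continuousOn_const) hF.stronglyMeasurable hFC hFkC
  calc ∫ τ, φ (j τ s) ∂μ
      ≤ ∫ τ, (φ 0 + ∫ t in (0 : ℝ)..s, F t (k (σ t τ))) ∂μ :=
        integral_mono hφj ((integrable_const _).add hint) hpointwise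
    _ = ∫ τ, (φ 0 + ∫ t in (0 : ℝ)..s, F t (k τ)) ∂μ := by
        rw [integral_add (integrable_const _) hint, integral_add (integrable_const _) hunshuffled,
          integral_intervalIntegral_comp_measurePreserving hs.le hk hσ hkσ hF.stronglyMeasurable
            hFC hFkC]
    _ = ∫ τ, φ (sn (-(k τ)) s) ∂μ := by
        simp only [F, integral_cumulativeSensitivity hφ hs, add_sub_cancel]

/-- **Constant coefficients are best** (corollary of the coefficient-shuffling theorem).
Let `(T, μ)` be a probability space, `k : T → ℝ` bounded measurable, and
`(σ_t)_{t ∈ [0, s]}` a family of measure-preserving maps with `σ₀ = id` such that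
`t ↦ k(σ_t(τ))` is continuous on `[0, s]` for each `τ`. If `j(τ, ·)` solves the Jacobi
equation `∂ₜ² j(τ, t) = k(σ_t(τ))·j(τ, t)` on `[0, s]` with standard initial conditions
`j(τ, 0) = 0`, `∂ₜ j(τ, 0) = 1`, and `j(τ, t) > 0` on `(0, s]`, then for every real
`p ≥ 1`,
`∫_T j(τ, s)^p dμ(τ) ≤ ∫_T sn(−k(τ), s)^p dμ(τ)`,
the right-hand side being the corresponding total for the unshuffled constant-coefficient
family. -/
theorem constant_coefficients_are_best
    {T : Type*} [MeasurableSpace T] (μ : Measure T) [IsProbabilityMeasure μ]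
    (s : ℝ) (hs : 0 < s) (p : ℝ) (hp : 1 ≤ p)
    (k : T → ℝ) (hkmeas : Measurable k) (C : ℝ) (hkbd : ∀ τ, |k τ| ≤ C)
    (σ : ℝ → T → T) (hσmeas : ∀ t, Measurable (σ t))
    (hσmp : ∀ t, MeasurePreserving (σ t) μ μ) (hσ0 : σ 0 = id)
    (hkcont : ∀ τ, ContinuousOn (fun t => k (σ t τ)) (Set.Icc 0 s))
    (j : T → ℝ → ℝ) (hjmeas : Measurable (fun q : T × ℝ => j q.1 q.2))
    (hjC : ∀ τ, ContDiff ℝ 2 (j τ))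
    (hj0 : ∀ τ, j τ 0 = 0) (hj0' : ∀ τ, deriv (j τ) 0 = 1)
    (hjeq : ∀ τ, ∀ t ∈ Set.Icc (0 : ℝ) s, deriv (deriv (j τ)) t = k (σ t τ) * j τ t)
    (hjpos : ∀ τ, ∀ t ∈ Set.Ioc (0 : ℝ) s, 0 < j τ t) :
    ∫ τ, j τ s ^ p ∂μ ≤ ∫ τ, sn (-(k τ)) s ^ p ∂μ :=
  constant_coefficients_are_best_general hs
    (Real.contDiff_rpow_const_of_le (by exact_mod_cast hp)) (convexOn_rpow hp)
    (Real.monotoneOn_rpow_Ici_of_exponent_nonneg (zero_le_one.trans hp)) hkmeas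
    (fun τ => (le_abs_self _).trans (hkbd τ)) (fun t _ => hσmp t) hkcont
    (fun τ => .of_contDiff (hjC τ) (hj0 τ) (hj0' τ) (hjeq τ)) hjpos
    (hjmeas.comp measurable_prodMk_right).aestronglyMeasurable
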